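/- arXiv:1211.6227 — 2 statements merged into one kernel-verified Lean document; each statement's English description precedes it below -/
import Mathlib

section
/- Let n ≥ 1, and let μ and ν be probability measures on ℝⁿ with bounded supports spt μ and spt ν, with μ absolutely continuous with respect to Lebesgue measure. Let u : ℝⁿ → ℝ be a convex function which is a Brenier solution of the optimal transportation problem with cost c(x,x̄) = −⟪x,x̄⟫ from μ to ν, in the sense that there exists a Borel map T : ℝⁿ → ℝⁿ with T(x) ∈ ∂u(x) for μ-almost every x and with push-forward T_#μ = ν. Assume moreover that there is a constant Λ > 0 such that Leb(∂u(E) ∩ spt ν) ≤ Λ · Leb(E) for every Borel set E ⊆ ℝⁿ. Then for every x ∈ ℝⁿ such that ∂u(x) ∩ interior(spt ν) ≠ ∅, the affine dimension of the convex set ∂u(x) is strictly less than n/2; i.e. 2 · finrank ℝ (vectorSpan ℝ (∂u(x))) < n. -/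
open RealInnerProductSpace MeasureTheory

/-- The subdifferential of `u : E → ℝ` at `x`:
`∂u(x) = {p ∈ E : u(y) ≥ u(x) + ⟪y − x, p⟫ for all y ∈ E}`. -/
def subdiff {E : Type*} [NormedAddCommGroup E] [InnerProductSpace ℝ E]
    (u : E → ℝ) (x : E) : Set E :=
  {p | ∀ y, u x + ⟪y - x, p⟫ ≤ u y}

/-- The image of a set under the subdifferential map: `∂u(A) = ⋃_{x ∈ A} ∂u(x)`. -/
def subdiffImage {E : Type*} [NormedAddCommGroup E] [InnerProductSpace ℝ E]
    (u : E → ℝ) (A : Set E) : Set E :=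
  ⋃ x ∈ A, subdiff u x

/-- The topological support of a measure: the set of points all of whose neighborhoods
have positive measure. -/
def msupport {α : Type*} [TopologicalSpace α] [MeasurableSpace α] (μ : Measure α) : Set α :=
  {x | ∀ U ∈ nhds x, μ U ≠ 0}

/-!
Let `V` be the direction of `∂u(x₀)`, `k = dim V`, and let `p₀` be relatively interior to `∂u(x₀)`.
The conjugate `u*` is finite near `p₀`, so all points near `p₀` have preimages under `∂u`, and these
stay in a compact set. Every `x` with `p₀ ∈ ∂u(x)` satisfies `∂u(x₀) ⊆ ∂u(x)`; let `x₁` be the one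
farthest from `x₀`, and put `e = x₁ - x₀`. For `a ∈ V` small, `|d - e| ≤ δ` and `h ≪ δ`,
monotonicity and the choice of `x₁` force every preimage of `p₀ + a + h d` to lie within `3δ` of
`x₁`. Cyclic monotonicity against the translations of `p₀ + a + h d` along `V` improves this to
`O(δh)` in the directions of `V`. So a cylinder of volume comparable to `(hδ)^(n-k)` is covered by
the image under `∂u` of one of volume comparable to `(δh)^k δ^(n-k)`. Comparing volumes gives
`h^(n-k) ≤ C δ^k h^k` for all `h ≪ δ ≪ 1`, which is impossible when `k > 0` and `n - k ≤ k`.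
-/

section

open Filter Set Topology Metric
open scoped Pointwise

section RelativeInterior

variable {F : Type*} [NormedAddCommGroup F] [NormedSpace ℝ F] {s U : Set F} {q y : F}

lemma eventually_add_mem_intrinsicInterior (hq : q ∈ intrinsicInterior ℝ s) :
    ∀ᶠ a in 𝓝[vectorSpan ℝ s] 0, q + a ∈ intrinsicInterior ℝ s := by
  obtain ⟨q', hq', rfl⟩ := mem_intrinsicInterior.1 hq
  have hmem (a : vectorSpan ℝ s) : (q' : F) + a ∈ affineSpan ℝ s := by
    rw [add_comm, ← vadd_eq_add]
    exact AffineSubspace.vadd_mem_of_mem_direction (by simp [direction_affineSpan]) q'.2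
  have hcont : Continuous fun a : vectorSpan ℝ s ↦ (⟨q' + a, hmem a⟩ : affineSpan ℝ s) := by
    fun_prop
  have hnhds : 𝓝[vectorSpan ℝ s] (0 : F) = map (↑) (𝓝 (0 : vectorSpan ℝ s)) :=
    (map_nhds_subtype_val (0 : vectorSpan ℝ s)).symm
  rw [hnhds, eventually_map]
  filter_upwards [hcont.continuousAt.eventually_mem
    (isOpen_interior.mem_nhds (by simpa using hq'))] with a ha
  exact mem_intrinsicInterior.2 ⟨_, ha, rfl⟩

lemma exists_forall_add_mem_intrinsicInterior_inter (hq : q ∈ intrinsicInterior ℝ s)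
    (hU : IsOpen U) (hqU : q ∈ U) :
    ∃ r > 0, ∀ a ∈ vectorSpan ℝ s, ‖a‖ ≤ 2 * r → q + a ∈ intrinsicInterior ℝ s ∩ U := by
  have hevU : ∀ᶠ a in 𝓝[vectorSpan ℝ s] 0, q + a ∈ U :=
    (((continuous_const_add q).tendsto 0).mono_left nhdsWithin_le_nhds).eventually
      (hU.mem_nhds (by simpa using hqU))
  obtain ⟨ε, hε, h⟩ := (nhdsWithin_hasBasis nhds_basis_closedBall _).mem_iff.1
    ((eventually_add_mem_intrinsicInterior hq).and hevU)
  exact ⟨ε / 2, half_pos hε, fun a ha har ↦ h ⟨by simpa [mul_div_cancel₀] using har, ha⟩⟩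

lemma mem_intrinsicInterior_of_eventually_add_mem (hq : q ∈ s)
    (h : ∀ᶠ a in 𝓝[vectorSpan ℝ s] 0, q + a ∈ s) : q ∈ intrinsicInterior ℝ s := by
  let q' : affineSpan ℝ s := ⟨q, subset_affineSpan ℝ s hq⟩
  have hsub : Tendsto (fun x : affineSpan ℝ s ↦ (x : F) - q) (𝓝 q') (𝓝[vectorSpan ℝ s] 0) := by
    refine tendsto_nhdsWithin_iff.2 ⟨?_, .of_forall fun x ↦ ?_⟩
    · have : Continuous fun x : affineSpan ℝ s ↦ (x : F) - q := by fun_prop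
      simpa [q'] using this.tendsto q'
    · simpa [direction_affineSpan] using AffineSubspace.vsub_mem_direction x.2 q'.2
  refine mem_intrinsicInterior.2 ⟨q', mem_interior_iff_mem_nhds.2 ?_, rfl⟩
  filter_upwards [hsub.eventually h] with x hx
  simpa using hx

lemma openSegment_subset_intrinsicInterior (hs : Convex ℝ s) (hq : q ∈ s)
    (hy : y ∈ intrinsicInterior ℝ s) : openSegment ℝ q y ⊆ intrinsicInterior ℝ s := by
  rintro _ ⟨α, β, hα, hβ, hαβ, rfl⟩
  refine mem_intrinsicInterior_of_eventually_add_mem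
    (hs hq (intrinsicInterior_subset hy) hα.le hβ.le hαβ) ?_
  have hscale : Tendsto (fun a : F ↦ β⁻¹ • a) (𝓝[vectorSpan ℝ s] 0) (𝓝[vectorSpan ℝ s] 0) := by
    refine tendsto_nhdsWithin_iff.2 ⟨?_, ?_⟩
    · simpa using ((continuous_const_smul β⁻¹).tendsto (0 : F)).mono_left nhdsWithin_le_nhds
    · filter_upwards [self_mem_nhdsWithin] with a ha using Submodule.smul_mem _ _ ha
  filter_upwards [hscale.eventually (eventually_add_mem_intrinsicInterior hy)] with a ha
  have := hs hq (intrinsicInterior_subset ha) hα.le hβ.le hαβ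
  rwa [smul_add, smul_inv_smul₀ hβ.ne', ← add_assoc] at this

lemma intrinsicInterior_inter_nonempty [FiniteDimensional ℝ F] (hs : Convex ℝ s) (hU : IsOpen U)
    (h : (s ∩ U).Nonempty) : (intrinsicInterior ℝ s ∩ U).Nonempty := by
  obtain ⟨q, hqs, hqU⟩ := h
  obtain ⟨y, hy⟩ := Set.Nonempty.intrinsicInterior hs ⟨q, hqs⟩
  have hq : q ∈ closure (openSegment ℝ q y) :=
    segment_subset_closure_openSegment (left_mem_segment ℝ q y)
  obtain ⟨z, hzU, hz⟩ := mem_closure_iff.1 hq U hU hqU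
  exact ⟨z, openSegment_subset_intrinsicInterior hs hqs hy hz, hzU⟩

lemma interior_closure_eq_interior_of_convex [FiniteDimensional ℝ F] (hs : Convex ℝ s) :
    interior (closure s) = interior s := by
  rcases (interior (closure s)).eq_empty_or_nonempty with hempty | hne
  · rw [hempty, subset_empty_iff.1 ((interior_mono subset_closure).trans_eq hempty)]
  · refine hs.interior_closure_eq_interior_of_nonempty_interior ?_
    rw [hs.closure.interior_nonempty_iff_affineSpan_eq_top] at hne
    rw [hs.interior_nonempty_iff_affineSpan_eq_top, eq_top_iff, ← hne]
    exact affineSpan_le.2 (closure_minimal (subset_affineSpan ℝ s)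
      (AffineSubspace.closed_of_finiteDimensional _))

end RelativeInterior

section Conjugate

variable {E : Type*} [NormedAddCommGroup E] [InnerProductSpace ℝ E] {u : E → ℝ}

/-- The sublevel set `{u* ≤ C}` of the Legendre–Fenchel conjugate `u* p = sup_x (⟪x, p⟫ - u x)`,
written without the possibly infinite supremum; if it is a neighbourhood of `p`, then `u - ⟪·, p⟫`
is coercive. -/
def conjSublevel (u : E → ℝ) (C : ℝ) : Set E :=
  {p | ∀ x, ⟪x, p⟫ - C ≤ u x}

/-- The effective domain `{u* < ∞}` of the Legendre–Fenchel conjugate of `u`, a convex set that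
contains `∂u(E)` and serves to find preimages under `∂u` of the points in its interior. -/
def conjDomain (u : E → ℝ) : Set E :=
  ⋃ C, conjSublevel u C

lemma monotone_conjSublevel : Monotone (conjSublevel u) :=
  fun _ _ hC _ hp x ↦ (sub_le_sub_left hC _).trans (hp x)

lemma convex_conjSublevel (C : ℝ) : Convex ℝ (conjSublevel u C) := by
  simp only [conjSublevel, sub_le_iff_le_add, ofPred_forall]
  exact convex_iInter fun x ↦ convex_halfSpace_le (innerSL ℝ x).toLinearMap.isLinear _

lemma convex_conjDomain : Convex ℝ (conjDomain u) :=
  monotone_conjSublevel.directed_le.convex_iUnion fun C ↦ convex_conjSublevel C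

lemma exists_conjSublevel_mem_nhds [FiniteDimensional ℝ E] {p : E}
    (hp : p ∈ interior (conjDomain u)) : ∃ C, conjSublevel u C ∈ 𝓝 p := by
  obtain ⟨b, hpb, hb⟩ :=
    exists_mem_interior_convexHull_affineBasis (isOpen_interior.mem_nhds hp)
  have hvertices (i) : ∃ C, b i ∈ conjSublevel u C :=
    mem_iUnion.1 (interior_subset (hb (subset_convexHull ℝ _ (mem_range_self i))))
  choose c hc using hvertices
  obtain ⟨C, hC⟩ := (finite_range c).bddAbove
  refine ⟨C, mem_of_superset (mem_interior_iff_mem_nhds.1 hpb)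
    (convexHull_min ?_ (convex_conjSublevel C))⟩
  rintro _ ⟨i, rfl⟩
  exact monotone_conjSublevel (hC (mem_range_self i)) (hc i)

lemma mul_norm_sub_le_of_closedBall_subset_conjSublevel {p : E} {ρ C : ℝ} (hρ : 0 ≤ ρ)
    (h : closedBall p ρ ⊆ conjSublevel u C) (x : E) : ρ * ‖x‖ - C ≤ u x - ⟪x, p⟫ := by
  rcases eq_or_ne x 0 with rfl | hx
  · simpa using h (mem_closedBall_self hρ) 0
  have hx' : ‖x‖ ≠ 0 := norm_ne_zero_iff.2 hx
  have hmem : p + (ρ / ‖x‖) • x ∈ closedBall p ρ := by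
    rw [mem_closedBall_iff_norm, add_sub_cancel_left, norm_smul,
      Real.norm_of_nonneg (by positivity), div_mul_cancel₀ _ hx']
  have hpair : ⟪x, p + (ρ / ‖x‖) • x⟫ = ⟪x, p⟫ + ρ * ‖x‖ := by
    rw [inner_add_right, inner_smul_right, real_inner_self_eq_norm_sq]
    field_simp
  linarith [h hmem x]

lemma exists_eventually_mul_norm_sub_le [FiniteDimensional ℝ E] {p : E}
    (hp : p ∈ interior (conjDomain u)) :
    ∃ ρ > 0, ∃ C, ∀ᶠ q in 𝓝 p, ∀ x, ρ * ‖x‖ - C ≤ u x - ⟪x, q⟫ := by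
  obtain ⟨C, hC⟩ := exists_conjSublevel_mem_nhds hp
  obtain ⟨R, hR, hball⟩ := nhds_basis_closedBall.mem_iff.1 hC
  refine ⟨R / 2, half_pos hR, C, ?_⟩
  filter_upwards [closedBall_mem_nhds p (half_pos hR)] with q hq
  refine mul_norm_sub_le_of_closedBall_subset_conjSublevel (half_pos hR).le
    ((closedBall_subset_closedBall' ?_).trans hball)
  linarith [mem_closedBall.1 hq]

end Conjugate

section Subdifferential

variable {E : Type*} [NormedAddCommGroup E] [InnerProductSpace ℝ E] {u : E → ℝ}
  {x x₀ x₁ y z p q d : E}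

lemma convex_subdiff (u : E → ℝ) (x : E) : Convex ℝ (subdiff u x) := by
  simp only [subdiff, ← le_sub_iff_add_le', ofPred_forall]
  exact convex_iInter fun y ↦ convex_halfSpace_le (innerSL ℝ (y - x)).toLinearMap.isLinear _

lemma subdiffImage_univ_subset_conjDomain : subdiffImage u univ ⊆ conjDomain u := by
  refine iUnion₂_subset fun x _ p hp ↦ mem_iUnion.2 ⟨⟪x, p⟫ - u x, fun y ↦ ?_⟩
  have := hp y
  rw [inner_sub_left] at this
  linarith

lemma exists_eventually_norm_le_of_mem_subdiff [FiniteDimensional ℝ E]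
    (hp : p ∈ interior (conjDomain u)) :
    ∃ M, ∀ᶠ q in 𝓝 p, ∀ x, q ∈ subdiff u x → ‖x‖ ≤ M := by
  obtain ⟨ρ, hρ, C, hC⟩ := exists_eventually_mul_norm_sub_le hp
  refine ⟨(u 0 + C) / ρ, ?_⟩
  filter_upwards [hC] with q hq x hx
  have h0 := hx 0
  rw [zero_sub, inner_neg_left] at h0
  rw [le_div_iff₀' hρ]
  linarith [hq x]

lemma interior_conjDomain_subset_subdiffImage [FiniteDimensional ℝ E]
    (hu : LowerSemicontinuous u) : interior (conjDomain u) ⊆ subdiffImage u univ := by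
  intro p hp
  obtain ⟨ρ, hρ, C, hC⟩ := exists_eventually_mul_norm_sub_le hp
  replace hC := hC.self_of_nhds
  have hlsc : LowerSemicontinuous fun x ↦ u x - ⟪x, p⟫ := by
    have : Continuous fun x ↦ -⟪x, p⟫ := by fun_prop
    simpa only [sub_eq_add_neg] using hu.add this.lowerSemicontinuous
  have h0 : (0 : E) ∈ closedBall 0 ((u 0 + C) / ρ) :=
    mem_closedBall_self (div_nonneg (neg_le_iff_add_nonneg.1 (by simpa using hC 0)) hρ.le)
  obtain ⟨x, -, hx⟩ := (hlsc.lowerSemicontinuousOn _).exists_isMinOn ⟨0, h0⟩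
    (isCompact_closedBall 0 ((u 0 + C) / ρ))
  have hmin (y : E) : u x - ⟪x, p⟫ ≤ u y - ⟪y, p⟫ := by
    by_cases hy : y ∈ closedBall 0 ((u 0 + C) / ρ)
    · exact hx hy
    · rw [mem_closedBall_zero_iff, not_le, div_lt_iff₀' hρ] at hy
      have hx0 : u x - ⟪x, p⟫ ≤ u 0 := by simpa using hx h0
      linarith [hC y]
  refine mem_biUnion (mem_univ x) fun y ↦ ?_
  rw [inner_sub_left]
  linarith [hmin y]

lemma isClosed_graph_subdiff (hu : LowerSemicontinuous u) :
    IsClosed {z : E × E | z.2 ∈ subdiff u z.1} := by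
  have hgraph : {z : E × E | z.2 ∈ subdiff u z.1} =
      ⋂ y, {z | u z.1 + ⟪y - z.1, z.2⟫ ≤ u y} := by
    ext; simp [subdiff]
  rw [hgraph]
  refine isClosed_iInter fun y ↦ ?_
  have : Continuous fun z : E × E ↦ ⟪y - z.1, z.2⟫ := by fun_prop
  exact ((hu.comp continuous_fst).add this.lowerSemicontinuous).isClosed_preimage (u y)

lemma isClosed_setOf_subset_subdiff (hu : LowerSemicontinuous u) (P : Set E) :
    IsClosed {x | P ⊆ subdiff u x} := by
  simp only [subset_def, ofPred_forall]
  exact isClosed_iInter fun p ↦ isClosed_iInter fun _ ↦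
    (isClosed_graph_subdiff hu).preimage (by fun_prop : Continuous fun x ↦ (x, p))

lemma inner_sub_sub_nonneg_of_mem_subdiff (hp : p ∈ subdiff u x) (hq : q ∈ subdiff u y) :
    0 ≤ ⟪x - y, p - q⟫ := by
  have hxy := hp y
  have hyx := hq x
  simp only [inner_sub_left, inner_sub_right] at *
  linarith

-- Cyclic monotonicity of `∂u` along the cycle `x → y → z → x`.
lemma inner_sub_le_inner_sub_of_mem_subdiff {c : E} (hx : p + d ∈ subdiff u x)
    (hy : p + c + d ∈ subdiff u y) (hz : p + c ∈ subdiff u z) :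
    ⟪x - z, c⟫ ≤ ⟪y - z, d⟫ := by
  have hyx := hy x
  have hxz := hx z
  have hzy := hz y
  simp only [inner_add_right, inner_sub_left] at *
  linarith

-- For `p ∈ ∂u(x₀)` one has `⟪x - x₀, p⟫ ≤ u x - u x₀`, with equality at the relatively interior
-- point `q`; a linear function attaining its maximum there is constant on `∂u(x₀)`.
lemma subdiff_subset_subdiff_of_mem_intrinsicInterior
    (hq : q ∈ intrinsicInterior ℝ (subdiff u x₀)) (hqx : q ∈ subdiff u x) :
    subdiff u x₀ ⊆ subdiff u x := by
  intro p hp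
  have hle {p' : E} (hp' : p' ∈ subdiff u x₀) : ⟪x - x₀, p'⟫ ≤ ⟪x - x₀, q⟫ := by
    have hqx₀ := hqx x₀
    rw [← neg_sub x x₀, inner_neg_left] at hqx₀
    linarith [hp' x]
  have hdir : q - p ∈ vectorSpan ℝ (subdiff u x₀) :=
    vsub_mem_vectorSpan ℝ (intrinsicInterior_subset hq) hp
  have hsmall : Tendsto (fun t : ℝ ↦ t • (q - p)) (𝓝[>] 0) (𝓝[vectorSpan ℝ (subdiff u x₀)] 0) := by
    refine tendsto_nhdsWithin_iff.2 ⟨?_, .of_forall fun t ↦ Submodule.smul_mem _ t hdir⟩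
    have : Continuous fun t : ℝ ↦ t • (q - p) := by fun_prop
    simpa using (this.tendsto 0).mono_left nhdsWithin_le_nhds
  obtain ⟨t, htq, ht⟩ :=
    ((hsmall.eventually (eventually_add_mem_intrinsicInterior hq)).and self_mem_nhdsWithin).exists
  have hextend := hle (intrinsicInterior_subset htq)
  rw [inner_add_right, inner_smul_right, add_le_iff_nonpos_right, inner_sub_right] at hextend
  have heq : ⟪x - x₀, p⟫ = ⟪x - x₀, q⟫ :=
    (hle hp).antisymm (sub_nonpos.1 (nonpos_of_mul_nonpos_right hextend ht))
  intro y
  have hqx₀ := hqx x₀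
  have hpy := hp y
  simp only [inner_sub_left] at *
  linarith

lemma exists_isMaxOn_norm_sub_of_subset_subdiff (hu : LowerSemicontinuous u) {K : Set E}
    (hK : IsCompact K) (hsubK : ∀ x, subdiff u x₀ ⊆ subdiff u x → x ∈ K) :
    ∃ x₁, subdiff u x₀ ⊆ subdiff u x₁ ∧
      ∀ x, subdiff u x₀ ⊆ subdiff u x → ‖x - x₀‖ ≤ ‖x₁ - x₀‖ := by
  have hcomp : IsCompact {x | subdiff u x₀ ⊆ subdiff u x} :=
    hK.of_isClosed_subset (isClosed_setOf_subset_subdiff hu _) hsubK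
  exact hcomp.exists_isMaxOn ⟨x₀, Subset.rfl⟩
    (by fun_prop : ContinuousOn (fun x ↦ ‖x - x₀‖) _)

lemma norm_sub_le_of_norm_sub_le_norm_sub {δ : ℝ} (hfar : ‖x - x₀‖ ≤ ‖x₁ - x₀‖)
    (hd : ‖d - (x₁ - x₀)‖ ≤ δ) (hpos : 0 ≤ ⟪x - x₁, d⟫) : ‖x - x₁‖ ≤ 2 * δ := by
  have hsq : ‖x - x₀‖ ^ 2 = ‖x - x₁‖ ^ 2 + 2 * ⟪x - x₁, x₁ - x₀⟫ + ‖x₁ - x₀‖ ^ 2 := by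
    rw [← norm_add_sq_real, sub_add_sub_cancel]
  have hfar' : ‖x - x₀‖ ^ 2 ≤ ‖x₁ - x₀‖ ^ 2 := by gcongr
  have herr : ⟪x - x₁, d⟫ - ⟪x - x₁, x₁ - x₀⟫ ≤ ‖x - x₁‖ * δ := by
    rw [← inner_sub_right]
    exact (real_inner_le_norm _ _).trans (by gcongr)
  nlinarith [norm_nonneg (x - x₁), norm_nonneg (d - (x₁ - x₀))]

-- As `h → 0`, the preimages of `p + h • d` accumulate at points `x` with `∂u(x₀) ⊆ ∂u(x)`, and
-- monotonicity against `p ∈ ∂u(x₁)` keeps them in the half-space `0 ≤ ⟪x - x₁, d⟫`.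
lemma eventually_norm_sub_lt_of_add_smul_mem_subdiff [FiniteDimensional ℝ E]
    (hu : LowerSemicontinuous u) {P K : Set E} (hP : IsCompact P)
    (hPint : P ⊆ intrinsicInterior ℝ (subdiff u x₀)) (hK : IsCompact K)
    (hx₁ : subdiff u x₀ ⊆ subdiff u x₁)
    (hfar : ∀ x, subdiff u x₀ ⊆ subdiff u x → ‖x - x₀‖ ≤ ‖x₁ - x₀‖) {δ : ℝ} (hδ : 0 < δ) :
    ∀ᶠ h in 𝓝[>] (0 : ℝ), ∀ p ∈ P, ∀ d ∈ closedBall (x₁ - x₀) δ, ∀ x ∈ K,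
      p + h • d ∈ subdiff u x → ‖x - x₁‖ < 3 * δ := by
  let far : Set (ℝ × E × E × E) := {z | z.2.1 + z.1 • z.2.2.1 ∈ subdiff u z.2.2.2 ∧
    0 ≤ ⟪z.2.2.2 - x₁, z.2.2.1⟫ ∧ 3 * δ ≤ ‖z.2.2.2 - x₁‖}
  have hclosed : IsClosed far := by
    refine IsClosed.and ?_ (.and (isClosed_le ?_ ?_) (isClosed_le ?_ ?_)) <;> try fun_prop
    exact (isClosed_graph_subdiff hu).preimage (by fun_prop :
      Continuous fun z : ℝ × E × E × E ↦ (z.2.2.2, z.2.1 + z.1 • z.2.2.1))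
  have hzero : ∀ w ∈ P ×ˢ closedBall (x₁ - x₀) δ ×ˢ K, (0, w) ∉ far := by
    rintro ⟨p, d, x⟩ ⟨hp, hd, -⟩ ⟨hpx, hpos, hge⟩
    simp only [zero_smul, add_zero] at hpx
    have := norm_sub_le_of_norm_sub_le_norm_sub
      (hfar x (subdiff_subset_subdiff_of_mem_intrinsicInterior (hPint hp) hpx))
      (mem_closedBall_iff_norm.1 hd) hpos
    linarith
  have hev : ∀ᶠ h in 𝓝 (0 : ℝ), ∀ w ∈ P ×ˢ closedBall (x₁ - x₀) δ ×ˢ K, (h, w) ∉ far :=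
    (hP.prod ((isCompact_closedBall _ _).prod hK)).eventually_forall_of_forall_eventually
      fun w hw ↦ hclosed.isOpen_compl.mem_nhds (hzero w hw)
  filter_upwards [hev.filter_mono nhdsWithin_le_nhds, self_mem_nhdsWithin]
    with h hh hpos p hp d hd x hx hpx
  by_contra! hge
  refine hh (p, d, x) ⟨hp, hd, hx⟩ ⟨hpx, ?_, hge⟩
  have := inner_sub_sub_nonneg_of_mem_subdiff hpx (hx₁ (intrinsicInterior_subset (hPint hp)))
  rw [add_sub_cancel_left, inner_smul_right] at this
  exact nonneg_of_mul_nonneg_right this hpos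

end Subdifferential

section Cylinder

variable {E : Type*} [NormedAddCommGroup E] [InnerProductSpace ℝ E]
  {V : Submodule ℝ E} [V.HasOrthogonalProjection] {U : Set E} {r s t c : ℝ} {y p v : E}

/-- The product of the ball of radius `s` in `V` and the ball of radius `t` in `Vᗮ`, both centred
at `0`, as a subset of `E = V ⊕ Vᗮ`; both sides of the volume comparison are of this form. -/
def orthCylinder (V : Submodule ℝ E) [V.HasOrthogonalProjection] (s t : ℝ) : Set E :=
  {y | ‖V.starProjection y‖ ≤ s ∧ ‖Vᗮ.starProjection y‖ ≤ t}

lemma isCompact_orthCylinder [FiniteDimensional ℝ E] (V : Submodule ℝ E) (s t : ℝ) :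
    IsCompact (orthCylinder V s t) := by
  refine isCompact_of_isClosed_isBounded ?_ (isBounded_iff_forall_norm_le.2 ⟨s + t, ?_⟩)
  · refine .and (isClosed_le ?_ ?_) (isClosed_le ?_ ?_) <;> fun_prop
  · rintro y ⟨hs, ht⟩
    rw [← V.starProjection_add_starProjection_orthogonal y]
    exact norm_add_le_of_le hs ht

lemma volume_orthCylinder [FiniteDimensional ℝ E] [MeasurableSpace E] [BorelSpace E]
    (V : Submodule ℝ E) (hs : 0 ≤ s) (ht : 0 ≤ t) :
    volume (orthCylinder V s t) =
      ENNReal.ofReal (s ^ Module.finrank ℝ V * t ^ Module.finrank ℝ Vᗮ) *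
        (volume (closedBall (0 : V) 1) * volume (closedBall (0 : Vᗮ) 1)) := by
  have hpre : orthCylinder V s t = (fun y ↦ WithLp.ofLp (V.orthogonalDecomposition y)) ⁻¹'
      closedBall 0 s ×ˢ closedBall 0 t := by
    ext y
    simp [orthCylinder, Submodule.orthogonalDecomposition_apply, Set.mem_prod]
  have hmp : MeasurePreserving fun y : E ↦ WithLp.ofLp (V.orthogonalDecomposition y) :=
    (WithLp.volume_preserving_ofLp V Vᗮ).comp V.orthogonalDecomposition.measurePreserving
  rw [hpre, hmp.measure_preimage
    (measurableSet_closedBall.prod measurableSet_closedBall).nullMeasurableSet,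
    Measure.volume_eq_prod, Measure.prod_prod, Measure.addHaar_closedBall' _ _ hs,
    Measure.addHaar_closedBall' _ _ ht, ENNReal.ofReal_mul (by positivity)]
  ring

lemma norm_starProjection_le_of_forall_inner_le (hr : 0 < r) (hc : 0 ≤ c)
    (h : ∀ b ∈ V, ‖b‖ ≤ r → ⟪y, b⟫ ≤ c * r) : ‖V.starProjection y‖ ≤ c := by
  rcases eq_or_ne (V.starProjection y) 0 with h0 | h0
  · rwa [h0, norm_zero]
  have hn : 0 < ‖V.starProjection y‖ := norm_pos_iff.2 h0
  have hproj := V.starProjection_apply_mem y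
  have hinner : ⟪y, V.starProjection y⟫ = ‖V.starProjection y‖ ^ 2 := by
    have := Submodule.starProjection_inner_eq_zero y _ hproj
    rwa [inner_sub_left, real_inner_self_eq_norm_sq, sub_eq_zero] at this
  have hr_norm : ‖(r / ‖V.starProjection y‖) • V.starProjection y‖ ≤ r := by
    rw [norm_smul, Real.norm_of_nonneg (by positivity), div_mul_cancel₀ _ hn.ne']
  refine le_of_mul_le_mul_right ?_ hr
  calc ‖V.starProjection y‖ * r
    _ = ⟪y, (r / ‖V.starProjection y‖) • V.starProjection y⟫ := by
      rw [inner_smul_right, hinner]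
      field_simp
    _ ≤ c * r := h _ (V.smul_mem _ hproj) hr_norm

lemma vadd_orthCylinder_subset
    (h : ∀ a ∈ V, ‖a‖ ≤ r → ∀ d ∈ closedBall v t, p + a + d ∈ U) :
    (p + v) +ᵥ orthCylinder V r t ⊆ U := by
  rintro _ ⟨y, ⟨hyV, hyt⟩, rfl⟩
  have := h _ (V.starProjection_apply_mem y) hyV (v + Vᗮ.starProjection y) (by simpa using hyt)
  rwa [add_add_add_comm, V.starProjection_add_starProjection_orthogonal] at this

lemma vadd_orthCylinder_subset_subdiffImage {u : E → ℝ} {x₁ : E} {η : ℝ}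
    (hr : 0 < r) (hx₁ : ∀ a ∈ V, ‖a‖ ≤ 2 * r → p + a ∈ subdiff u x₁)
    (hmem : ∀ a ∈ V, ‖a‖ ≤ 2 * r → ∀ d ∈ closedBall v t, ∃ x, p + a + d ∈ subdiff u x)
    (hnear : ∀ a ∈ V, ‖a‖ ≤ 2 * r → ∀ d ∈ closedBall v t, ∀ x, p + a + d ∈ subdiff u x →
      ‖x - x₁‖ ≤ η) (hc : η * (‖v‖ + t) ≤ c * r) :
    (p + v) +ᵥ orthCylinder V r t ⊆ subdiffImage u (x₁ +ᵥ orthCylinder V c η) := by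
  refine vadd_orthCylinder_subset fun a haV ha d hd ↦ ?_
  have ha' : ‖a‖ ≤ 2 * r := by linarith
  have hdnorm : ‖d‖ ≤ ‖v‖ + t := norm_le_norm_add_const_of_dist_le hd
  obtain ⟨x, hx⟩ := hmem a haV ha' d hd
  have hxη := hnear a haV ha' d hd x hx
  have hη : 0 ≤ η := (norm_nonneg _).trans hxη
  have hc₀ : 0 ≤ c := nonneg_of_mul_nonneg_left
    ((mul_nonneg hη ((norm_nonneg d).trans hdnorm)).trans hc) hr
  refine mem_biUnion (mem_vadd_set_iff_neg_vadd_mem.2 ?_) hx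
  rw [vadd_eq_add, neg_add_eq_sub]
  refine ⟨norm_starProjection_le_of_forall_inner_le hr hc₀ fun b hbV hb ↦ ?_,
    (Vᗮ.norm_starProjection_apply_le _).trans hxη⟩
  have habV := V.add_mem haV hbV
  have hab : ‖a + b‖ ≤ 2 * r := (norm_add_le_of_le ha hb).trans_eq (two_mul r).symm
  obtain ⟨y, hy⟩ := hmem (a + b) habV hab d hd
  calc ⟪x - x₁, b⟫
    _ ≤ ⟪y - x₁, d⟫ := inner_sub_le_inner_sub_of_mem_subdiff hx (by rwa [add_assoc p a b])
      (by simpa only [add_assoc] using hx₁ (a + b) habV hab)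
    _ ≤ ‖y - x₁‖ * ‖d‖ := real_inner_le_norm _ _
    _ ≤ η * (‖v‖ + t) := by
      gcongr
      exact hnear (a + b) habV hab d hd y hy
    _ ≤ c * r := hc

end Cylinder

lemma eventually_forall_add_smul_mem {F : Type*} [AddCommGroup F] [Module ℝ F]
    [TopologicalSpace F] [ContinuousAdd F] [ContinuousSMul ℝ F] {P D U : Set F}
    (hP : IsCompact P) (hD : IsCompact D) (hU : IsOpen U) (hPU : P ⊆ U) :
    ∀ᶠ h in 𝓝 (0 : ℝ), ∀ p ∈ P, ∀ d ∈ D, p + h • d ∈ U := by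
  have hev : ∀ᶠ h in 𝓝 (0 : ℝ), ∀ w ∈ P ×ˢ D, w.1 + h • w.2 ∈ U := by
    refine (hP.prod hD).eventually_forall_of_forall_eventually fun w hw ↦ ?_
    have : Continuous fun z : ℝ × F × F ↦ z.2.1 + z.1 • z.2.2 := by fun_prop
    exact this.continuousAt.eventually_mem (hU.mem_nhds (by simpa using hPU hw.1))
  filter_upwards [hev] with h hh p hp d hd using hh (p, d) ⟨hp, hd⟩

section AffineDimension

variable {E : Type*} [NormedAddCommGroup E] [InnerProductSpace ℝ E] [FiniteDimensional ℝ E]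
  {u : E → ℝ} {V : Submodule ℝ E} {S U K : Set E} {x₀ p₀ : E} {r s t : ℝ}

lemma exists_eventually_vadd_orthCylinder_subset (hu : LowerSemicontinuous u) (hr : 0 < r)
    (hU : IsOpen U) (hK : IsCompact K)
    (hdisc : ∀ a ∈ V, ‖a‖ ≤ 2 * r → p₀ + a ∈ intrinsicInterior ℝ (subdiff u x₀) ∩ U)
    (hmem : U ⊆ subdiffImage u univ) (hmemK : ∀ q ∈ U, ∀ x, q ∈ subdiff u x → x ∈ K) :
    ∃ (e x₁ : E) (C : ℝ), 0 < C ∧ ∀ᶠ δ in 𝓝[>] (0 : ℝ), ∀ᶠ h in 𝓝[>] (0 : ℝ),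
      (p₀ + h • e) +ᵥ orthCylinder V r (h * δ) ⊆
        U ∩ subdiffImage u (x₁ +ᵥ orthCylinder V (C * (δ * h)) (3 * δ)) := by
  have hp₀ := hdisc 0 V.zero_mem (by simp [hr.le])
  rw [add_zero] at hp₀
  obtain ⟨x₁, hx₁, hfar⟩ := exists_isMaxOn_norm_sub_of_subset_subdiff hu hK
    fun x hx ↦ hmemK p₀ hp₀.2 x (hx (intrinsicInterior_subset hp₀.1))
  let P : Set E := (p₀ + ·) '' (V ∩ closedBall 0 (2 * r))
  have hP : IsCompact P :=
    ((isCompact_closedBall _ _).inter_left V.closed_of_finiteDimensional).image (by fun_prop)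
  have haP {a : E} (ha : a ∈ V) (har : ‖a‖ ≤ 2 * r) : p₀ + a ∈ P :=
    mem_image_of_mem _ ⟨ha, by simpa using har⟩
  have hPdisc : P ⊆ intrinsicInterior ℝ (subdiff u x₀) ∩ U := by
    rintro _ ⟨a, ⟨ha, har⟩, rfl⟩
    exact hdisc a ha (by simpa using har)
  have hPint := hPdisc.trans inter_subset_left
  set e := x₁ - x₀
  refine ⟨e, x₁, 3 * (‖e‖ + 1) / r, by positivity, ?_⟩
  filter_upwards [Ioo_mem_nhdsGT one_pos] with δ ⟨hδ₀, hδ₁⟩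
  have hinU := eventually_forall_add_smul_mem hP (isCompact_closedBall e δ) hU
    (hPdisc.trans inter_subset_right)
  filter_upwards [hinU.filter_mono nhdsWithin_le_nhds, self_mem_nhdsWithin,
    eventually_norm_sub_lt_of_add_smul_mem_subdiff hu hP hPint hK hx₁ hfar hδ₀]
    with h hhU (hh : 0 < h) hnear
  have hball {d : E} (hd : d ∈ closedBall (h • e) (h * δ)) : ∃ d' ∈ closedBall e δ, h • d' = d := by
    rwa [← mem_smul_set, smul_closedBall _ _ hδ₀.le, Real.norm_of_nonneg hh.le]
  have haU : ∀ a ∈ V, ‖a‖ ≤ 2 * r → ∀ d ∈ closedBall (h • e) (h * δ), p₀ + a + d ∈ U := by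
    intro a ha har d hd
    obtain ⟨d', hd', rfl⟩ := hball hd
    exact hhU _ (haP ha har) d' hd'
  refine subset_inter
    (vadd_orthCylinder_subset fun a ha har ↦ haU a ha (har.trans (by linarith)))
    (vadd_orthCylinder_subset_subdiffImage hr
      (fun a ha har ↦ hx₁ (intrinsicInterior_subset (hdisc a ha har).1))
      (fun a ha har d hd ↦ by simpa [subdiffImage] using hmem (haU a ha har d hd))
      (fun a ha har d hd x hx ↦ ?_) ?_)
  · have hxK := hmemK _ (haU a ha har d hd) x hx
    obtain ⟨d', hd', rfl⟩ := hball hd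
    exact (hnear _ (haP ha har) d' hd' x hxK hx).le
  · rw [norm_smul, Real.norm_of_nonneg hh.le]
    field_simp
    gcongr

lemma pow_mul_pow_le_of_vadd_orthCylinder_subset [MeasurableSpace E] [BorelSpace E] {Λ : NNReal}
    (hvol : ∀ A, IsCompact A → volume (subdiffImage u A ∩ S) ≤ Λ * volume A) {a b : E}
    {s' t' : ℝ} (hs : 0 ≤ s) (ht : 0 ≤ t) (hs' : 0 ≤ s') (ht' : 0 ≤ t')
    (hsub : a +ᵥ orthCylinder V s t ⊆ S ∩ subdiffImage u (b +ᵥ orthCylinder V s' t')) :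
    s ^ Module.finrank ℝ V * t ^ Module.finrank ℝ Vᗮ ≤
      Λ * (s' ^ Module.finrank ℝ V * t' ^ Module.finrank ℝ Vᗮ) := by
  set β := volume (closedBall (0 : V) 1) * volume (closedBall (0 : Vᗮ) 1)
  have hβ₀ : β ≠ 0 := mul_ne_zero (measure_closedBall_pos _ _ one_pos).ne'
    (measure_closedBall_pos _ _ one_pos).ne'
  have hβ : β ≠ ⊤ := ENNReal.mul_ne_top measure_closedBall_lt_top.ne measure_closedBall_lt_top.ne
  have hle : volume (orthCylinder V s t) ≤ Λ * volume (orthCylinder V s' t') := by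
    rw [inter_comm] at hsub
    simpa only [measure_vadd] using
      (measure_mono hsub).trans (hvol _ ((isCompact_orthCylinder V s' t').vadd b))
  rw [volume_orthCylinder V hs ht, volume_orthCylinder V hs' ht', ← mul_assoc (Λ : ENNReal),
    ENNReal.mul_le_mul_iff_left hβ₀ hβ, ← ENNReal.ofReal_coe_nnreal,
    ← ENNReal.ofReal_mul (by positivity)] at hle
  exact (ENNReal.ofReal_le_ofReal_iff (by positivity)).1 hle

lemma lt_of_eventually_pow_mul_pow_le {k m : ℕ} {Λ C : ℝ} (hk : k ≠ 0) (hr : 0 < r)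
    (hΛ : 0 ≤ Λ) (hC : 0 ≤ C)
    (h : ∀ᶠ δ in 𝓝[>] (0 : ℝ), ∀ᶠ h in 𝓝[>] (0 : ℝ),
      r ^ k * (h * δ) ^ m ≤ Λ * ((C * (δ * h)) ^ k * (3 * δ) ^ m)) : k < m := by
  by_contra! hmk
  have hbound : ∀ᶠ δ in 𝓝[>] (0 : ℝ), r ^ k ≤ Λ * (C ^ k * δ ^ k * 3 ^ m) := by
    filter_upwards [h, self_mem_nhdsWithin] with δ hδ (hδ₀ : 0 < δ)
    obtain ⟨h, hle, hh₀, hh₁⟩ := (hδ.and (Ioo_mem_nhdsGT one_pos)).exists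
    have hpow : h ^ k ≤ h ^ m := pow_le_pow_of_le_one hh₀.le hh₁.le hmk
    refine le_of_mul_le_mul_right ?_ (by positivity : 0 < (h * δ) ^ m)
    calc r ^ k * (h * δ) ^ m
      _ ≤ Λ * ((C * (δ * h)) ^ k * (3 * δ) ^ m) := hle
      _ = Λ * (C ^ k * δ ^ k * 3 ^ m) * (h ^ k * δ ^ m) := by ring
      _ ≤ Λ * (C ^ k * δ ^ k * 3 ^ m) * (h * δ) ^ m := by
        rw [mul_pow h]
        gcongr
  have hlim : Tendsto (fun δ : ℝ ↦ Λ * (C ^ k * δ ^ k * 3 ^ m)) (𝓝[>] 0) (𝓝 0) := by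
    have : Continuous fun δ : ℝ ↦ Λ * (C ^ k * δ ^ k * 3 ^ m) := by fun_prop
    simpa [hk] using (this.tendsto 0).mono_left nhdsWithin_le_nhds
  exact (pow_pos hr k).not_ge (ge_of_tendsto hlim hbound)

lemma exists_isOpen_subset_subdiffImage_of_mem_interior (hu : LowerSemicontinuous u)
    (hS : S ⊆ closure (subdiffImage u univ)) (hp₀ : p₀ ∈ interior S) :
    ∃ U ⊆ S, IsOpen U ∧ p₀ ∈ U ∧ U ⊆ subdiffImage u univ ∧
      ∃ K, IsCompact K ∧ ∀ q ∈ U, ∀ x, q ∈ subdiff u x → x ∈ K := by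
  have hp : p₀ ∈ interior (conjDomain u) := by
    rw [← interior_closure_eq_interior_of_convex convex_conjDomain]
    exact interior_mono (hS.trans (closure_mono subdiffImage_univ_subset_conjDomain)) hp₀
  obtain ⟨M, hM⟩ := exists_eventually_norm_le_of_mem_subdiff hp
  obtain ⟨W, hWM, hW, hpW⟩ := _root_.eventually_nhds_iff.1 hM
  refine ⟨interior S ∩ (interior (conjDomain u) ∩ W),
    inter_subset_left.trans interior_subset,
    isOpen_interior.inter (isOpen_interior.inter hW), ⟨hp₀, hp, hpW⟩,
    fun q hq ↦ interior_conjDomain_subset_subdiffImage hu hq.2.1,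
    closedBall 0 M, isCompact_closedBall 0 M, fun q hq x hx ↦ ?_⟩
  exact mem_closedBall_zero_iff.2 (hWM q hq.2.2 x hx)

theorem affdim_subdiff_lt_half_dim_general [Nontrivial E] [MeasurableSpace E] [BorelSpace E]
    (hu : LowerSemicontinuous u) (hS : S ⊆ closure (subdiffImage u univ)) {Λ : NNReal}
    (hvol : ∀ A, IsCompact A → volume (subdiffImage u A ∩ S) ≤ Λ * volume A)
    (hx₀ : (subdiff u x₀ ∩ interior S).Nonempty) :
    2 * Module.finrank ℝ (vectorSpan ℝ (subdiff u x₀)) < Module.finrank ℝ E := by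
  set V := vectorSpan ℝ (subdiff u x₀)
  rcases eq_or_ne (Module.finrank ℝ V) 0 with hk | hk
  · rw [hk]
    exact Module.finrank_pos
  obtain ⟨p₀, hp₀, hp₀S⟩ :=
    intrinsicInterior_inter_nonempty (convex_subdiff u x₀) isOpen_interior hx₀
  obtain ⟨U, hUS, hU, hp₀U, hmem, K, hK, hmemK⟩ :=
    exists_isOpen_subset_subdiffImage_of_mem_interior hu hS hp₀S
  obtain ⟨r, hr, hdisc⟩ := exists_forall_add_mem_intrinsicInterior_inter hp₀ hU hp₀U
  obtain ⟨e, x₁, C, hC, hsub⟩ :=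
    exists_eventually_vadd_orthCylinder_subset hu hr hU hK hdisc hmem hmemK
  have hlt : Module.finrank ℝ V < Module.finrank ℝ Vᗮ := by
    refine lt_of_eventually_pow_mul_pow_le hk hr Λ.2 hC.le ?_
    filter_upwards [hsub, self_mem_nhdsWithin] with δ hδ (hδ₀ : 0 < δ)
    filter_upwards [hδ, self_mem_nhdsWithin] with h hh (hh₀ : 0 < h)
    exact pow_mul_pow_le_of_vadd_orthCylinder_subset hvol hr.le (by positivity) (by positivity)
      (by positivity) (hh.trans (inter_subset_inter_left _ hUS))
  linarith [V.finrank_add_finrank_orthogonal]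

end AffineDimension

lemma msupport_map_subset_closure {α β : Type*} [MeasurableSpace α] [MeasurableSpace β]
    [TopologicalSpace β] [OpensMeasurableSpace β] {μ : Measure α} {f : α → β}
    (hf : AEMeasurable f μ) {s : Set β} (hs : ∀ᵐ x ∂μ, f x ∈ s) :
    msupport (μ.map f) ⊆ closure s := by
  intro y hy
  by_contra hys
  refine hy _ (isClosed_closure.isOpen_compl.mem_nhds hys) ?_
  rw [Measure.map_apply_of_aemeasurable hf isClosed_closure.measurableSet.compl]
  exact measure_mono_null (fun x hx hxs ↦ hx (subset_closure hxs)) hs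

end

/-- **Caffarelli's dimensional bound on the degeneracy of optimal maps**
(Euclidean quadratic cost). Let `μ, ν` be probability measures on `ℝⁿ` with bounded
supports, `μ` absolutely continuous with respect to Lebesgue measure, and let
`u` be a convex Brenier potential transporting `μ` to `ν` (i.e. there is a Borel map
`T` with `T x ∈ ∂u(x)` for `μ`-a.e. `x` and `T₊μ = ν`), satisfying
`Leb(∂u(E) ∩ spt ν) ≤ Λ · Leb(E)` for all Borel `E`. Then at every point `x` where
`∂u(x)` meets the interior of `spt ν`, the affine dimension of `∂u(x)` is strictly
less than `n/2`. -/
theorem affdim_subdiff_lt_half_dim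
    (n : ℕ) (hn : 1 ≤ n)
    (μ ν : Measure (EuclideanSpace ℝ (Fin n)))
    [IsProbabilityMeasure μ] [IsProbabilityMeasure ν]
    (hμbdd : Bornology.IsBounded (msupport μ))
    (hνbdd : Bornology.IsBounded (msupport ν))
    (hac : μ ≪ volume)
    (u : EuclideanSpace ℝ (Fin n) → ℝ) (hu : ConvexOn ℝ Set.univ u)
    (T : EuclideanSpace ℝ (Fin n) → EuclideanSpace ℝ (Fin n))
    (hT : Measurable T)
    (hTsub : ∀ᵐ x ∂μ, T x ∈ subdiff u x)
    (hpush : Measure.map T μ = ν)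
    (Λ : NNReal) (hΛ : 0 < Λ)
    (hvol : ∀ E : Set (EuclideanSpace ℝ (Fin n)), MeasurableSet E →
      volume (subdiffImage u E ∩ msupport ν) ≤ (Λ : ENNReal) * volume E) :
    ∀ x : EuclideanSpace ℝ (Fin n),
      (subdiff u x ∩ interior (msupport ν)).Nonempty →
      2 * Module.finrank ℝ (vectorSpan ℝ (subdiff u x)) < n := by
  intro x hx
  have hcont : Continuous u := continuousOn_univ.1 (by simpa using hu.continuousOn_interior)
  have : Nontrivial (EuclideanSpace ℝ (Fin n)) :=
    Module.nontrivial_of_finrank_pos (R := ℝ) (by rwa [finrank_euclideanSpace_fin])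
  have hsupp : msupport ν ⊆ closure (subdiffImage u Set.univ) := hpush ▸
    msupport_map_subset_closure hT.aemeasurable
      (hTsub.mono fun y hy ↦ Set.mem_biUnion (Set.mem_univ y) hy)
  simpa using affdim_subdiff_lt_half_dim_general hcont.lowerSemicontinuous hsupp
    (fun A hA ↦ hvol A hA.measurableSet) hx
end

section
/- Let Ω, Ω̄ ⊆ ℝⁿ be bounded open sets and c : ℝⁿ × ℝⁿ → ℝ a cost function satisfying (A0)–(A2) for Ω, Ω̄, such that Ω and Ω̄ are c-convex with respect to each other, and such that c satisfies Loeper's maximum principle. Let u : Ω → ℝ be a c-convex function. Then for every x̄₀ ∈ Ω̄ and λ₀ ∈ ℝ, the c-sublevel set {x ∈ Ω : u(x) ≤ −c(x, x̄₀) + λ₀} is c-convex with respect to x̄₀; that is, the set {−D_x̄ c(x, x̄₀) : x ∈ Ω, u(x) ≤ −c(x, x̄₀) + λ₀} ⊆ ℝⁿ is convex. -/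
open Set

/-- `D_x c(x,y)`: the Fréchet derivative of `c` in its first variable, identified with a
vector in `ℝⁿ` via the inner product (i.e. the gradient in the first variable). -/
noncomputable def Dx {n : ℕ} (c : EuclideanSpace ℝ (Fin n) → EuclideanSpace ℝ (Fin n) → ℝ)
    (x y : EuclideanSpace ℝ (Fin n)) : EuclideanSpace ℝ (Fin n) :=
  gradient (fun z => c z y) x

/-- `D_x̄ c(x,y)`: the Fréchet derivative of `c` in its second variable, identified with a
vector in `ℝⁿ` via the inner product (i.e. the gradient in the second variable). -/
noncomputable def Dy {n : ℕ} (c : EuclideanSpace ℝ (Fin n) → EuclideanSpace ℝ (Fin n) → ℝ)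
    (x y : EuclideanSpace ℝ (Fin n)) : EuclideanSpace ℝ (Fin n) :=
  gradient (fun z => c x z) y

/-- The `c`-subdifferential of `u` at `x₀` (relative to domains `Ω`, `Ω̄`):
`∂_c u(x₀) = {x̄ ∈ Ω̄ : u(x) ≥ u(x₀) − c(x,x̄) + c(x₀,x̄) for all x ∈ Ω}`. -/
def csub {n : ℕ} (Ω Ωb : Set (EuclideanSpace ℝ (Fin n)))
    (c : EuclideanSpace ℝ (Fin n) → EuclideanSpace ℝ (Fin n) → ℝ)
    (u : EuclideanSpace ℝ (Fin n) → ℝ) (x₀ : EuclideanSpace ℝ (Fin n)) :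
    Set (EuclideanSpace ℝ (Fin n)) :=
  {y ∈ Ωb | ∀ x ∈ Ω, u x₀ - c x y + c x₀ y ≤ u x}

/-!
Suppose the sublevel set `S = {x ∈ Ω | u x ≤ -c(x, ȳ₀) + λ₀}` misses a point `z ∈ Ω`, and let `ȳ`
support `u` at `z`. Every `x ∈ S` satisfies `-c(x, ȳ) + c(z, ȳ) < -c(x, ȳ₀) + c(z, ȳ₀)`. Let `ȳ_t`
be the `c`-segment with respect to `z` from `ȳ₀` to `ȳ`. By Loeper's maximum principle
`-c(x, ȳ_t) + c(z, ȳ_t)` is maximal at `t = 0`, so its derivative there is nonpositive: with `w`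
the initial velocity of the segment, `D_x̄ c(z, ȳ₀) w ≤ D_x̄ c(x, ȳ₀) w`. By nondegeneracy the right
side has no critical point in `x`, and the points `x` satisfying the strict inequality above form
an open set, so this one is strict as well. Thus in the coordinates `x ↦ D_x̄ c(x, ȳ₀)`, in which
`Ω` is convex, each point of `Ω` outside `S` is strictly separated from `S` by a linear functional,
and therefore `S` is convex.
-/

open Filter Function InnerProductSpace Topology

section Convexity

variable {𝕜 V W : Type*} [Semiring 𝕜] [PartialOrder 𝕜] [AddCommGroup V] [Module 𝕜 V]
  [AddCommGroup W] [Module 𝕜 W]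

lemma convex_of_forall_exists_lt [IsStrictOrderedRing 𝕜] {A S : Set V} (hA : Convex 𝕜 A)
    (hSA : S ⊆ A) (hsep : ∀ p ∈ A \ S, ∃ φ : V →ₗ[𝕜] 𝕜, ∀ q ∈ S, φ p < φ q) : Convex 𝕜 S := by
  intro q hq q' hq' a b ha hb hab
  by_contra hp
  obtain ⟨φ, hφ⟩ := hsep _ ⟨hA (hSA hq) (hSA hq') ha hb hab, hp⟩
  exact lt_irrefl (φ (a • q + b • q'))
    (convex_halfSpace_gt φ.isLinear _ (hφ q hq) (hφ q' hq') ha hb hab)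

lemma convex_image_linearEquiv_iff (e : V ≃ₗ[𝕜] W) {s : Set V} :
    Convex 𝕜 (e '' s) ↔ Convex 𝕜 s :=
  ⟨fun h => by simpa [image_image] using h.linear_image (e.symm : W →ₗ[𝕜] V),
    fun h => h.linear_image (e : V →ₗ[𝕜] W)⟩

end Convexity

section LocalExtrema

variable {E : Type*} [NormedAddCommGroup E] [NormedSpace ℝ E]

lemma lt_of_eventually_le_of_fderiv_ne_zero {f : E → ℝ} {a : E} {r : ℝ}
    (hle : ∀ᶠ x in 𝓝 a, r ≤ f x) (hf : fderiv ℝ f a ≠ 0) : r < f a := by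
  refine hle.self_of_nhds.lt_of_ne ?_
  rintro rfl
  exact hf (IsLocalMin.fderiv_eq_zero hle)

lemma nonpos_of_hasDerivAt_of_isLocalMaxOn_Ici {f : ℝ → ℝ} {f' a : ℝ} (hf : HasDerivAt f f' a)
    (hmax : IsLocalMaxOn f (Ici a) a) : f' ≤ 0 := by
  have hone : (1 : ℝ) ∈ posTangentConeAt (Ici a) a :=
    mem_posTangentConeAt_of_segment_subset <|
      (segment_eq_Icc (by simp)).trans_subset Icc_subset_Ici_self
  simpa using hmax.hasFDerivWithinAt_nonpos hf.hasFDerivAt.hasFDerivWithinAt hone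

end LocalExtrema

lemma exists_curve_image_eq_line {𝕜 Y V : Type*} [RCLike 𝕜] [NormedAddCommGroup Y]
    [NormedSpace 𝕜 Y] [CompleteSpace Y] [NormedAddCommGroup V] [NormedSpace 𝕜 V] [CompleteSpace V]
    {g : Y → V} {y₀ : Y} (hg : ContDiffAt 𝕜 1 g y₀) (hbij : Bijective (fderiv 𝕜 g y₀)) (v : V) :
    ∃ (γ : 𝕜 → Y) (w : Y), γ 0 = y₀ ∧ HasDerivAt γ w 0 ∧ fderiv 𝕜 g y₀ w = v ∧
      ∀ᶠ t in 𝓝 (0 : 𝕜), g (γ t) = g y₀ + t • v := by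
  let e := ContinuousLinearEquiv.ofBijective (fderiv 𝕜 g y₀)
    (LinearMap.ker_eq_bot.2 hbij.1) (LinearMap.range_eq_top.2 hbij.2)
  have hstrict : HasStrictFDerivAt g (e : Y →L[𝕜] V) y₀ := hg.hasStrictFDerivAt one_ne_zero
  have hline : HasDerivAt (fun t : 𝕜 => g y₀ + t • v) v 0 := by
    simpa using ((hasDerivAt_id (0 : 𝕜)).smul_const v).const_add (g y₀)
  have hline₀ : g y₀ + (0 : 𝕜) • v = g y₀ := by simp
  refine ⟨fun t => hstrict.localInverse g e y₀ (g y₀ + t • v), e.symm v, ?_, ?_,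
    e.apply_symm_apply v, ?_⟩
  · simpa only [hline₀] using hstrict.localInverse_apply_image
  · exact hstrict.to_localInverse.hasFDerivAt.comp_hasDerivAt_of_eq 0 hline hline₀.symm
  · exact (hline₀ ▸ hline.continuousAt.tendsto).eventually hstrict.eventually_right_inverse

section PartialDerivatives

variable {𝕜 X Y F : Type*} [NontriviallyNormedField 𝕜]
  [NormedAddCommGroup X] [NormedSpace 𝕜 X] [NormedAddCommGroup Y] [NormedSpace 𝕜 Y]
  [NormedAddCommGroup F] [NormedSpace 𝕜 F]
  {c : X → Y → F} {x : X} {y : Y}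

variable (𝕜) in
/-- The partial derivative `D_x c(x, y)`, as a continuous linear map rather than a gradient, so
that it makes sense on arbitrary normed spaces. -/
noncomputable def fderivFst (c : X → Y → F) (x : X) (y : Y) : X →L[𝕜] F :=
  fderiv 𝕜 (fun x' => c x' y) x

variable (𝕜) in
/-- The partial derivative `D_x̄ c(x, y)`, as a continuous linear map like `fderivFst`. -/
noncomputable def fderivSnd (c : X → Y → F) (x : X) (y : Y) : Y →L[𝕜] F :=
  fderiv 𝕜 (c x) y

lemma hasFDerivAt_fderivSnd (hc : DifferentiableAt 𝕜 (uncurry c) (x, y)) :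
    HasFDerivAt (c x) (fderivSnd 𝕜 c x y) y :=
  (DifferentiableAt.comp y (f := fun y' => (x, y')) hc (by fun_prop)).hasFDerivAt

lemma fderivFst_eq_comp_inl (hc : DifferentiableAt 𝕜 (uncurry c) (x, y)) :
    fderivFst 𝕜 c x y = (fderiv 𝕜 (uncurry c) (x, y)).comp (.inl 𝕜 X Y) :=
  (hc.hasFDerivAt.comp x (f := fun x' => (x', y)) (hasFDerivAt_prodMk_left x y)).fderiv

lemma fderivSnd_eq_comp_inr (hc : DifferentiableAt 𝕜 (uncurry c) (x, y)) :
    fderivSnd 𝕜 c x y = (fderiv 𝕜 (uncurry c) (x, y)).comp (.inr 𝕜 X Y) :=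
  (hc.hasFDerivAt.comp y (f := fun y' => (x, y')) (hasFDerivAt_prodMk_right x y)).fderiv

lemma contDiffAt_fderivFst (hc : ContDiffAt 𝕜 2 (uncurry c) (x, y)) :
    ContDiffAt 𝕜 1 (fderivFst 𝕜 c x) y :=
  ContDiffAt.fderiv (f := fun y' x' => c x' y') (g := fun _ => x) (n := 2)
    (hc.comp (y, x) (contDiffAt_snd.prodMk contDiffAt_fst)) contDiffAt_const (by norm_num)

lemma contDiffAt_fderivSnd (hc : ContDiffAt 𝕜 2 (uncurry c) (x, y)) :
    ContDiffAt 𝕜 1 (fun x' => fderivSnd 𝕜 c x' y) x :=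
  ContDiffAt.fderiv (f := c) (g := fun _ => y) (n := 2) hc contDiffAt_const (by norm_num)

lemma fderiv_fderivFst_apply (hc : ContDiffAt 𝕜 2 (uncurry c) (x, y)) (v : X) (w : Y) :
    fderiv 𝕜 (fderivFst 𝕜 c x) y w v = fderiv 𝕜 (fderiv 𝕜 (uncurry c)) (x, y) (0, w) (v, 0) := by
  have hdiff : ∀ᶠ y' in 𝓝 y, DifferentiableAt 𝕜 (uncurry c) (x, y') :=
    (Continuous.prodMk_right x).continuousAt.eventually
      ((hc.eventually (by simp)).mono fun _ h => h.differentiableAt two_ne_zero)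
  have hD : HasFDerivAt (fderiv 𝕜 (uncurry c)) _ (x, y) :=
    ((hc.fderiv_right (m := 1) (by norm_num)).differentiableAt one_ne_zero).hasFDerivAt
  have hpartial := (hD.comp y (f := fun y' => (x, y')) (hasFDerivAt_prodMk_right x y)).clm_comp
    (hasFDerivAt_const (ContinuousLinearMap.inl 𝕜 X Y) y)
  rw [(hpartial.congr_of_eventuallyEq (hdiff.mono fun _ h => fderivFst_eq_comp_inl h)).fderiv]
  simp

lemma fderiv_fderivSnd_apply (hc : ContDiffAt 𝕜 2 (uncurry c) (x, y)) (v : X) (w : Y) :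
    fderiv 𝕜 (fun x' => fderivSnd 𝕜 c x' y) x v w =
      fderiv 𝕜 (fderiv 𝕜 (uncurry c)) (x, y) (v, 0) (0, w) := by
  have hdiff : ∀ᶠ x' in 𝓝 x, DifferentiableAt 𝕜 (uncurry c) (x', y) :=
    (Continuous.prodMk_left y).continuousAt.eventually
      ((hc.eventually (by simp)).mono fun _ h => h.differentiableAt two_ne_zero)
  have hD : HasFDerivAt (fderiv 𝕜 (uncurry c)) _ (x, y) :=
    ((hc.fderiv_right (m := 1) (by norm_num)).differentiableAt one_ne_zero).hasFDerivAt
  have hpartial := (hD.comp x (f := fun x' => (x', y)) (hasFDerivAt_prodMk_left x y)).clm_comp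
    (hasFDerivAt_const (ContinuousLinearMap.inr 𝕜 X Y) x)
  rw [(hpartial.congr_of_eventuallyEq (hdiff.mono fun _ h => fderivSnd_eq_comp_inr h)).fderiv]
  simp

lemma fderiv_fderivSnd_comm [IsRCLikeNormedField 𝕜]
    (hc : ContDiffAt 𝕜 2 (uncurry c) (x, y)) (v : X) (w : Y) :
    fderiv 𝕜 (fun x' => fderivSnd 𝕜 c x' y) x v w = fderiv 𝕜 (fderivFst 𝕜 c x) y w v := by
  rw [fderiv_fderivSnd_apply hc, fderiv_fderivFst_apply hc]
  exact hc.isSymmSndFDerivAt (by simp) (v, 0) (0, w)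

lemma fderiv_fderivSnd_apply_ne_zero [IsRCLikeNormedField 𝕜]
    (hc : ContDiffAt 𝕜 2 (uncurry c) (x, y))
    (hinj : Injective (fderiv 𝕜 (fderivFst 𝕜 c x) y)) {w : Y} (hw : w ≠ 0) :
    fderiv 𝕜 (fun x' => fderivSnd 𝕜 c x' y w) x ≠ 0 := by
  have hdiff := (contDiffAt_fderivSnd hc).differentiableAt one_ne_zero
  intro hzero
  refine hw ((injective_iff_map_eq_zero _).1 hinj w (ContinuousLinearMap.ext fun v => ?_))
  rw [← fderiv_fderivSnd_comm hc]
  simpa [fderiv_clm_apply hdiff (differentiableAt_const w)] using DFunLike.congr_fun hzero v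

end PartialDerivatives

section Cost

variable {X Y : Type*}

/-- `c`-convexity of `u` on `Ω`: at each point of `Ω` the function `u` is supported from below by
some `x ↦ -c(x, ȳ) + λ` with `ȳ ∈ Ω̄`. -/
def IsCostConvex (c : X → Y → ℝ) (Ω : Set X) (Ωb : Set Y) (u : X → ℝ) : Prop :=
  ∀ x₀ ∈ Ω, ∃ y₀ ∈ Ωb, ∃ l : ℝ, u x₀ = -c x₀ y₀ + l ∧ ∀ x ∈ Ω, -c x y₀ + l ≤ u x

variable [NormedAddCommGroup X] [NormedSpace ℝ X] [NormedAddCommGroup Y] [NormedSpace ℝ Y]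

/-- Loeper's maximum principle: along a `c`-segment with respect to `x₀`, the function
`-c(x, ·) + c(x₀, ·)` is at most the larger of its values at the endpoints. The `c`-segment is
described by `D_x c(x₀, ·)` instead of `-D_x c(x₀, ·)`, which gives the same curve. -/
def LoeperMaximumPrinciple (c : X → Y → ℝ) (Ω : Set X) (Ωb : Set Y) : Prop :=
  ∀ x₀ ∈ Ω, ∀ x ∈ Ω, ∀ y₀ ∈ Ωb, ∀ y₁ ∈ Ωb, ∀ t ∈ Icc (0 : ℝ) 1, ∀ yt ∈ Ωb,
    fderivFst ℝ c x₀ yt = (1 - t) • fderivFst ℝ c x₀ y₀ + t • fderivFst ℝ c x₀ y₁ →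
    -c x yt + c x₀ yt ≤ max (-c x y₀ + c x₀ y₀) (-c x y₁ + c x₀ y₁)

variable [CompleteSpace Y] {c : X → Y → ℝ} {Ω : Set X} {Ωb : Set Y} {x₀ : X} {y₀ y : Y}

lemma LoeperMaximumPrinciple.exists_fderivSnd_le (hL : LoeperMaximumPrinciple c Ω Ωb)
    (hΩb : IsOpen Ωb) (hc : ∀ x ∈ Ω, ContDiffAt ℝ 2 (uncurry c) (x, y₀))
    (htwist : InjOn (fderivFst ℝ c x₀) Ωb) (hbij : Bijective (fderiv ℝ (fderivFst ℝ c x₀) y₀))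
    (hx₀ : x₀ ∈ Ω) (hy₀ : y₀ ∈ Ωb) (hy : y ∈ Ωb) (hne : y ≠ y₀) :
    ∃ w ≠ 0, ∀ x ∈ Ω, -c x y + c x₀ y ≤ -c x y₀ + c x₀ y₀ →
      fderivSnd ℝ c x₀ y₀ w ≤ fderivSnd ℝ c x y₀ w := by
  obtain ⟨γ, w, hγ₀, hγ, hw, hseg⟩ := exists_curve_image_eq_line
    (contDiffAt_fderivFst (hc x₀ hx₀)) hbij (fderivFst ℝ c x₀ y - fderivFst ℝ c x₀ y₀)
  refine ⟨w, ?_, fun x hx hle => ?_⟩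
  · rintro rfl
    exact hne (htwist hy hy₀ (sub_eq_zero.1 (hw.symm.trans (map_zero _))))
  have hderiv : ∀ z ∈ Ω, HasDerivAt (fun t => c z (γ t)) (fderivSnd ℝ c z y₀ w) 0 := fun z hz =>
    (hasFDerivAt_fderivSnd ((hc z hz).differentiableAt two_ne_zero)).comp_hasDerivAt_of_eq 0 hγ
      hγ₀.symm
  have hmem : ∀ᶠ t in 𝓝 (0 : ℝ), γ t ∈ Ωb :=
    hγ.continuousAt.eventually (hΩb.mem_nhds (hγ₀.symm ▸ hy₀))
  have hmax : IsLocalMaxOn (fun t => -c x (γ t) + c x₀ (γ t)) (Ici 0) 0 := by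
    filter_upwards [nhdsWithin_le_nhds hmem, nhdsWithin_le_nhds hseg,
      Icc_mem_nhdsGE (zero_lt_one' ℝ)] with t htmem htseg ht
    rw [hγ₀, ← max_eq_left hle]
    exact hL x₀ hx₀ x hx y₀ hy₀ y hy t ht (γ t) htmem (by rw [htseg]; module)
  have hnonpos := nonpos_of_hasDerivAt_of_isLocalMaxOn_Ici
    ((hderiv x hx).fun_neg.fun_add (hderiv x₀ hx₀)) hmax
  linarith

lemma LoeperMaximumPrinciple.exists_fderivSnd_lt (hL : LoeperMaximumPrinciple c Ω Ωb)
    (hΩ : IsOpen Ω) (hΩb : IsOpen Ωb)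
    (hc : ∀ x ∈ Ω, ∀ y ∈ Ωb, ContDiffAt ℝ 2 (uncurry c) (x, y))
    (htwist : InjOn (fderivFst ℝ c x₀) Ωb)
    (hbij : ∀ x ∈ Ω, Bijective (fderiv ℝ (fderivFst ℝ c x) y₀))
    (hx₀ : x₀ ∈ Ω) (hy₀ : y₀ ∈ Ωb) (hy : y ∈ Ωb) :
    ∃ w, ∀ x ∈ Ω, -c x y + c x₀ y < -c x y₀ + c x₀ y₀ →
      fderivSnd ℝ c x₀ y₀ w < fderivSnd ℝ c x y₀ w := by
  obtain rfl | hne := eq_or_ne y y₀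
  · exact ⟨0, fun x _ hlt => absurd hlt (lt_irrefl _)⟩
  obtain ⟨w, hw, hle⟩ := hL.exists_fderivSnd_le hΩb (fun x hx => hc x hx y₀ hy₀) htwist
    (hbij x₀ hx₀) hx₀ hy₀ hy hne
  refine ⟨w, fun x hx hlt => lt_of_eventually_le_of_fderiv_ne_zero
    (f := fun x' => fderivSnd ℝ c x' y₀ w) ?_
    (fderiv_fderivSnd_apply_ne_zero (hc x hx y₀ hy₀) (hbij x hx).1 hw)⟩
  have hcont : ∀ y' ∈ Ωb, ContinuousAt (fun x' => c x' y') x := fun y' hy' =>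
    (hc x hx y' hy').continuousAt.comp (f := fun x' => (x', y')) (by fun_prop)
  filter_upwards [hΩ.mem_nhds hx, ((hcont y hy).neg.add_const (c x₀ y)).eventually_lt
    ((hcont y₀ hy₀).neg.add_const (c x₀ y₀)) hlt] with x' hx' hlt'
  exact hle x' hx' hlt'.le

theorem csublevel_set_cconvex_general {u : X → ℝ} (hΩ : IsOpen Ω) (hΩb : IsOpen Ωb)
    (hc : ∀ x ∈ Ω, ∀ y ∈ Ωb, ContDiffAt ℝ 2 (uncurry c) (x, y))
    (htwist : ∀ x ∈ Ω, InjOn (fderivFst ℝ c x) Ωb) (hy₀ : y₀ ∈ Ωb)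
    (hbij : ∀ x ∈ Ω, Bijective (fderiv ℝ (fderivFst ℝ c x) y₀))
    (hconv : Convex ℝ ((fun x => fderivSnd ℝ c x y₀) '' Ω))
    (hL : LoeperMaximumPrinciple c Ω Ωb) (hu : IsCostConvex c Ω Ωb u) (l₀ : ℝ) :
    Convex ℝ ((fun x => fderivSnd ℝ c x y₀) '' {x ∈ Ω | u x ≤ -c x y₀ + l₀}) := by
  refine convex_of_forall_exists_lt hconv (image_mono (sep_subset _ _)) ?_
  rintro _ ⟨⟨z, hz, rfl⟩, hzS⟩
  have hlt : -c z y₀ + l₀ < u z := lt_of_not_ge fun h => hzS (mem_image_of_mem _ ⟨hz, h⟩)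
  obtain ⟨y, hy, l, huz, hul⟩ := hu z hz
  obtain ⟨w, hw⟩ := hL.exists_fderivSnd_lt hΩ hΩb hc (htwist z hz) hbij hz hy₀ hy
  refine ⟨(ContinuousLinearMap.apply ℝ ℝ w : StrongDual ℝ Y →L[ℝ] ℝ), ?_⟩
  rintro _ ⟨x, ⟨hx, hux⟩, rfl⟩
  exact hw x hx (by linarith [hul x hx])

end Cost

section Gradient

variable {ι E : Type*} [NormedAddCommGroup E] [InnerProductSpace ℝ E] [CompleteSpace E]
  {f : ι → E → ℝ} {x : ι → E} {s : Set ι}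

/-- The Riesz isomorphism, as a linear rather than conjugate-linear map; it sends `fderiv ℝ f x` to
`gradient f x` definitionally. -/
noncomputable def rieszEquiv (E : Type*) [NormedAddCommGroup E] [InnerProductSpace ℝ E]
    [CompleteSpace E] : StrongDual ℝ E ≃L[ℝ] E :=
  (toDual ℝ E).symm.toContinuousLinearEquiv

lemma injOn_neg_gradient_iff :
    InjOn (fun i => -gradient (f i) (x i)) s ↔ InjOn (fun i => fderiv ℝ (f i) (x i)) s :=
  ⟨fun h => h.of_comp (g := fun p => -rieszEquiv E p),
    fun h => (neg_injective.comp (rieszEquiv E).injective).comp_injOn h⟩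

lemma convex_image_neg_gradient_iff :
    Convex ℝ ((fun i => -gradient (f i) (x i)) '' s) ↔
      Convex ℝ ((fun i => fderiv ℝ (f i) (x i)) '' s) := by
  rw [← convex_image_linearEquiv_iff ((rieszEquiv E).trans (.neg ℝ)).toLinearEquiv, image_image]
  rfl

lemma bijective_fderiv_gradient_iff {G : Type*} [NormedAddCommGroup G] [NormedSpace ℝ G]
    {f : G → E → ℝ} {x : E} {y : G} :
    Bijective (fderiv ℝ (fun y' => gradient (f y') x) y) ↔
      Bijective (fderiv ℝ (fun y' => fderiv ℝ (f y') x) y) := by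
  have hcomp : fderiv ℝ (fun y' => gradient (f y') x) y =
      (rieszEquiv E : StrongDual ℝ E →L[ℝ] E) ∘SL fderiv ℝ (fun y' => fderiv ℝ (f y') x) y :=
    (rieszEquiv E).comp_fderiv
  rw [hcomp, ContinuousLinearMap.coe_comp]
  exact (rieszEquiv E).bijective.of_comp_iff' _

lemma neg_gradient_eq_combo {f g h : E → ℝ} {x : E} {a b : ℝ}
    (hfgh : fderiv ℝ f x = a • fderiv ℝ g x + b • fderiv ℝ h x) :
    -gradient f x = a • -gradient g x + b • -gradient h x := by
  have hriesz := congrArg ((rieszEquiv E).trans (.neg ℝ)) hfgh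
  rwa [map_add, map_smul, map_smul] at hriesz

end Gradient

/-- Lemma 2.2 of the paper (for domains in `ℝⁿ`): under (A0)–(A2), mutual `c`-convexity of
the domains and Loeper's maximum principle, for a `c`-convex function `u` every
`c`-sublevel set `{x ∈ Ω : u(x) ≤ −c(x,x̄₀) + λ₀}` is `c`-convex with respect to `x̄₀`,
i.e. its image under `x ↦ −D_x̄ c(x,x̄₀)` is convex. -/
theorem csublevel_set_cconvex
    (n : ℕ) (Ω Ωb : Set (EuclideanSpace ℝ (Fin n)))
    (hΩo : IsOpen Ω) (hΩbd : Bornology.IsBounded Ω)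
    (hΩbo : IsOpen Ωb) (hΩbbd : Bornology.IsBounded Ωb)
    (c : EuclideanSpace ℝ (Fin n) → EuclideanSpace ℝ (Fin n) → ℝ)
    -- (A0): `c` is C⁴ on a neighborhood of the closure of `Ω × Ω̄`
    (hA0 : ∃ U : Set (EuclideanSpace ℝ (Fin n) × EuclideanSpace ℝ (Fin n)),
      IsOpen U ∧ closure (Ω ×ˢ Ωb) ⊆ U ∧
        ContDiffOn ℝ 4 (fun q : EuclideanSpace ℝ (Fin n) × EuclideanSpace ℝ (Fin n) =>
          c q.1 q.2) U)
    -- (A1), twist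
    (hA1x : ∀ x ∈ Ω, Set.InjOn (fun y => -Dx c x y) Ωb)
    (hA1y : ∀ y ∈ Ωb, Set.InjOn (fun x => -Dy c x y) Ω)
    -- (A2), nondegeneracy
    (hA2 : ∀ x ∈ Ω, ∀ y ∈ Ωb,
      Function.Bijective (fderiv ℝ (fun y' => Dx c x y') y))
    -- `Ω̄` is `c`-convex with respect to `Ω` and vice versa
    (hccΩb : ∀ x ∈ Ω, Convex ℝ ((fun y => -Dx c x y) '' Ωb))
    (hccΩ : ∀ y ∈ Ωb, Convex ℝ ((fun x => -Dy c x y) '' Ω))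
    -- Loeper's maximum principle
    (hLoeper : ∀ x₀ ∈ Ω, ∀ x ∈ Ω, ∀ y₀ ∈ Ωb, ∀ y₁ ∈ Ωb, ∀ t ∈ Set.Icc (0:ℝ) 1,
      ∀ yt ∈ Ωb,
        -Dx c x₀ yt = (1 - t) • (-Dx c x₀ y₀) + t • (-Dx c x₀ y₁) →
        -c x yt + c x₀ yt ≤ max (-c x y₀ + c x₀ y₀) (-c x y₁ + c x₀ y₁))
    (u : EuclideanSpace ℝ (Fin n) → ℝ)
    -- `u` is `c`-convex
    (hu : ∀ x₀ ∈ Ω, ∃ y₀ ∈ Ωb, ∃ l : ℝ,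
      u x₀ = -c x₀ y₀ + l ∧ ∀ x ∈ Ω, -c x y₀ + l ≤ u x) :
    ∀ xb₀ ∈ Ωb, ∀ l₀ : ℝ,
      Convex ℝ ((fun x => -Dy c x xb₀) '' {x ∈ Ω | u x ≤ -c x xb₀ + l₀}) := by
  intro xb₀ hxb₀ l₀
  obtain ⟨U, hU, hUsub, hcU⟩ := hA0
  have hc : ∀ x ∈ Ω, ∀ y ∈ Ωb, ContDiffAt ℝ 2 (uncurry c) (x, y) := fun x hx y hy =>
    (hcU.contDiffAt (hU.mem_nhds (hUsub (subset_closure ⟨hx, hy⟩)))).of_le (by norm_num)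
  exact convex_image_neg_gradient_iff.2 <| csublevel_set_cconvex_general hΩo hΩbo hc
    (fun x hx => injOn_neg_gradient_iff.1 (hA1x x hx)) hxb₀
    (fun x hx => bijective_fderiv_gradient_iff.1 (hA2 x hx xb₀ hxb₀))
    (convex_image_neg_gradient_iff.1 (hccΩ xb₀ hxb₀))
    (fun x₀ hx₀ x hx y₀ hy₀ y₁ hy₁ t ht yt hyt hseg =>
      hLoeper x₀ hx₀ x hx y₀ hy₀ y₁ hy₁ t ht yt hyt (neg_gradient_eq_combo hseg))
    hu l₀
end
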